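/- The cuspidal edge is the only non-degenerate rank one ω-singular point at which a generalized timelike minimal surface is a front: if f is a generalized timelike minimal surface with real Weierstrass data (g1, g2, ω1 du, ω2 dv), and p is a non-degenerate ω-singular point with rank(df_p) = 1 at which f is a front, then f is A-equivalent at p to the cuspidal edge f_CE(u,v) = (u, v^2, v^3) at the origin. -/

import Mathlib

noncomputable section

open Real Filter

abbrev R2 : Type := ℝ × ℝ
abbrev R3 : Type := ℝ × ℝ × ℝ

/-- The partial derivative in the `u`-direction. -/
def pu (f : R2 → R3) (p : R2) : R3 := fderiv ℝ f p (1, 0)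
/-- The partial derivative in the `v`-direction. -/
def pv (f : R2 → R3) (p : R2) : R3 := fderiv ℝ f p (0, 1)

/-- Determinant of three column vectors in ℝ³. -/
def det3 (a b c : R3) : ℝ :=
  a.1 * (b.2.1 * c.2.2 - b.2.2 * c.2.1)
  - b.1 * (a.2.1 * c.2.2 - a.2.2 * c.2.1)
  + c.1 * (a.2.1 * b.2.2 - a.2.2 * b.2.1)

/-- Determinant of two vectors in ℝ². -/
def det2 (a b : R2) : ℝ := a.1 * b.2 - a.2 * b.1

/-- Euclidean inner product on ℝ³. -/
def ip3 (a b : R3) : ℝ := a.1 * b.1 + a.2.1 * b.2.1 + a.2.2 * b.2.2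

/-- `f : ℝ² → ℝ³ = 𝕃³` is the generalized timelike minimal surface with real Weierstrass
data `(g1, g2, w1 du, w2 dv)`: it is smooth, its partial derivatives are
`f_u = (ω1/2)·(-1-g1², 1-g1², 2g1)` and `f_v = (ω2/2)·(1+g2², 1-g2², -2g2)`
(which encodes the Weierstrass-type integral representation), and it is an immersion
on an open dense set. -/
structure IsGTMS (f : R2 → R3) (g1 g2 w1 w2 : ℝ → ℝ) : Prop where
  smooth_f : ContDiff ℝ (⊤ : ℕ∞) f
  smooth_g1 : ContDiff ℝ (⊤ : ℕ∞) g1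
  smooth_g2 : ContDiff ℝ (⊤ : ℕ∞) g2
  smooth_w1 : ContDiff ℝ (⊤ : ℕ∞) w1
  smooth_w2 : ContDiff ℝ (⊤ : ℕ∞) w2
  deriv_u : ∀ p : R2, pu f p =
    ((-1 - g1 p.1 ^ 2) * w1 p.1 / 2, (1 - g1 p.1 ^ 2) * w1 p.1 / 2, g1 p.1 * w1 p.1)
  deriv_v : ∀ p : R2, pv f p =
    ((1 + g2 p.2 ^ 2) * w2 p.2 / 2, (1 - g2 p.2 ^ 2) * w2 p.2 / 2, -(g2 p.2 * w2 p.2))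
  dense_immersion : Dense {p : R2 | Function.Injective (fderiv ℝ f p)}

/-- `Φ` is a germ of diffeomorphism at `p`. -/
def IsLocalDiffeoAt {E F : Type*} [NormedAddCommGroup E] [NormedSpace ℝ E]
    [NormedAddCommGroup F] [NormedSpace ℝ F] (Φ : E → F) (p : E) : Prop :=
  ∃ (U : Set E) (V : Set F) (Φinv : F → E),
    IsOpen U ∧ p ∈ U ∧ IsOpen V ∧ Φ p ∈ V ∧
    ContDiffOn ℝ (⊤ : ℕ∞) Φ U ∧ ContDiffOn ℝ (⊤ : ℕ∞) Φinv V ∧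
    Set.MapsTo Φ U V ∧ Set.MapsTo Φinv V U ∧
    (∀ x ∈ U, Φinv (Φ x) = x) ∧ (∀ y ∈ V, Φ (Φinv y) = y)

/-- 𝒜-equivalence of the germ of `f1` at `p1` and the germ of `f2` at `p2`. -/
def AEquiv (f1 : R2 → R3) (p1 : R2) (f2 : R2 → R3) (p2 : R2) : Prop :=
  ∃ (Φ : R2 → R2) (Ψ : R3 → R3),
    IsLocalDiffeoAt Φ p1 ∧ Φ p1 = p2 ∧
    IsLocalDiffeoAt Ψ (f1 p1) ∧ Ψ (f1 p1) = f2 p2 ∧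
    ∀ᶠ x in nhds p1, Ψ (f1 x) = f2 (Φ x)

/-- The canonical unit normal of a generalized timelike minimal surface. -/
def gtmsNormal (g1 g2 : ℝ → ℝ) (p : R2) : R3 :=
  (Real.sqrt ((1 - g1 p.1 * g2 p.2) ^ 2 + 2 * (g1 p.1 + g2 p.2) ^ 2))⁻¹ •
    (g1 p.1 + g2 p.2, -g1 p.1 + g2 p.2, 1 + g1 p.1 * g2 p.2)

/-- The signed area density function `λ = det(f_u, f_v, n)`. -/
def areaDensity (f : R2 → R3) (g1 g2 : ℝ → ℝ) (p : R2) : ℝ :=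
  det3 (pu f p) (pv f p) (gtmsNormal g1 g2 p)

/-- `f` is a front at `p`: the Legendrian lift `(f, n)` is an immersion at `p`,
where `n` is the canonical unit normal. -/
def IsFrontAt (f : R2 → R3) (g1 g2 : ℝ → ℝ) (p : R2) : Prop :=
  Function.Injective (fderiv ℝ (fun q => (f q, gtmsNormal g1 g2 q)) p)

/-- The differential of `f` at `p` has rank one. -/
def RankOne (f : R2 → R3) (p : R2) : Prop :=
  LinearMap.rank (fderiv ℝ f p).toLinearMap = 1

/-- Directional derivative of `F` along the vector field `X`. -/
def vD (X : R2 → R2) (F : R2 → R3) : R2 → R3 := fun q => fderiv ℝ F q (X q)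

/-- `φ_i = g_i' / (g_i² ω_i)`. -/
def phiW (g w : ℝ → ℝ) : ℝ → ℝ := fun t => deriv g t / (g t ^ 2 * w t)
/-- `Φ_i = (g_i/g_i') φ_i'`. -/
def PhiW (g w : ℝ → ℝ) : ℝ → ℝ := fun t => g t / deriv g t * deriv (phiW g w) t

/-- standard cuspidal butterfly -/
def fCBF : R2 → R3 := fun q =>
  (q.1, 5 * q.2 ^ 4 + 2 * q.1 * q.2, 4 * q.2 ^ 5 + q.1 * q.2 ^ 2 - q.1 ^ 2)
/-- standard cuspidal S₁⁺ singularity -/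
def fCS1p : R2 → R3 := fun q => (q.1, q.2 ^ 2, q.2 ^ 3 * (q.1 ^ 2 + q.2 ^ 2))
/-- standard cuspidal S₁⁻ singularity -/
def fCS1m : R2 → R3 := fun q => (q.1, q.2 ^ 2, q.2 ^ 3 * (q.1 ^ 2 - q.2 ^ 2))
/-- standard cuspidal edge -/
def fCE : R2 → R3 := fun q => (q.1, q.2 ^ 2, q.2 ^ 3)
/-- standard (2,5)-cuspidal edge -/
def fCE25 : R2 → R3 := fun q => (q.1, q.2 ^ 2, q.2 ^ 5)
/-- standard cuspidal beaks -/
def fCBK : R2 → R3 := fun q =>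
  (q.2, q.1 ^ 3 - q.1 * q.2 ^ 2, 3 * q.1 ^ 4 - 2 * q.1 ^ 2 * q.2 ^ 2)
/-- standard cuspidal lips -/
def fCLP : R2 → R3 := fun q =>
  (q.2, q.1 ^ 3 + q.1 * q.2 ^ 2, 3 * q.1 ^ 4 + 2 * q.1 ^ 2 * q.2 ^ 2)
/-- standard D₄⁺ singularity -/
def fD4p : R2 → R3 := fun q =>
  (q.1 * q.2, q.1 ^ 2 + 3 * q.2 ^ 2, q.1 ^ 2 * q.2 + q.2 ^ 3)
/-- standard D₄⁻ singularity -/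
def fD4m : R2 → R3 := fun q =>
  (q.1 * q.2, q.1 ^ 2 - 3 * q.2 ^ 2, q.1 ^ 2 * q.2 - q.2 ^ 3)

open Topology
open scoped ContDiff

/-! Since `f_u` depends only on `u` and `f_v` only on `v`, the surface is a sum of two curves with
derivatives `ω1 • lightlikeU g1` and `ω2 • lightlikeV g2`. Suppose `ω1` vanishes at `p`.
Non-degeneracy means that `ω1' ≠ 0`, `ω2 ≠ 0` and `g1 g2 ≠ 1` there, and the front condition that
`g1' ≠ 0`. Hence the first curve has velocity zero and linearly independent second and third
derivatives, which together with the velocity of the second curve span `ℝ³`.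

It remains to see that such a sum is a cuspidal edge. The even and odd parts of the singular curve
are smooth functions of `s²` by Whitney's theorem, so after a translation the curve is
`E (s²) + s³ • O (s²)`. Therefore `f = G ∘ fCE` for `G (x, y, z) = B x + E y + z • O y`, up to the
choice of parameters, where `B` is the regular curve. The derivative of `G` at the origin has
columns `B'`, `E'`, `O`, hence `G` is a local diffeomorphism.
-/

section SmoothCurves

variable {F : Type*} [NormedAddCommGroup F] [NormedSpace ℝ F]

theorem contDiff_infty_of_forall_hasDerivAt {e : ℕ → ℝ → F}
    (he : ∀ n t, HasDerivAt (e n) (e (n + 1) t) t) (n : ℕ) : ContDiff ℝ ∞ (e n) := by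
  rw [contDiff_infty]
  intro k
  induction k generalizing n with
  | zero => exact contDiff_zero.2 (continuous_iff_continuousAt.2 fun t => (he n t).continuousAt)
  | succ k ih =>
    have hderiv : deriv (e n) = e (n + 1) := funext fun t => (he n t).deriv
    push_cast
    rw [contDiff_succ_iff_deriv, hderiv]
    exact ⟨fun t => (he n t).differentiableAt, by simp, ih (n + 1)⟩

theorem iteratedDeriv_eq_of_forall_hasDerivAt {e : ℕ → ℝ → F}
    (he : ∀ n t, HasDerivAt (e n) (e (n + 1) t) t) (n : ℕ) : iteratedDeriv n (e 0) = e n := by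
  induction n with
  | zero => exact iteratedDeriv_zero
  | succ n ih =>
    rw [iteratedDeriv_succ, ih]
    exact funext fun t => (he n t).deriv

theorem contDiff_infty_iteratedDeriv {f : ℝ → F} (hf : ContDiff ℝ ∞ f) (n : ℕ) :
    ContDiff ℝ ∞ (iteratedDeriv n f) := by
  rw [iteratedDeriv_eq_iterate]
  exact hf.iterate_deriv n

theorem hasDerivAt_of_contDiff_infty {f : ℝ → F} (hf : ContDiff ℝ ∞ f) (t : ℝ) :
    HasDerivAt f (deriv f t) t :=
  (hf.differentiable (by simp) t).hasDerivAt

theorem hasDerivAt_iteratedDeriv {f : ℝ → F} (hf : ContDiff ℝ ∞ f) (n : ℕ) (t : ℝ) :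
    HasDerivAt (iteratedDeriv n f) (iteratedDeriv (n + 1) f t) t := by
  rw [iteratedDeriv_succ]
  exact hasDerivAt_of_contDiff_infty (contDiff_infty_iteratedDeriv hf n) t

theorem hasDerivAt_integral_pow_smul_comp_mul {f : ℝ → F} (hf : ContDiff ℝ 1 f)
    (n : ℕ) (t : ℝ) :
    HasDerivAt (fun t => ∫ s in (0 : ℝ)..1, s ^ n • f (s * t))
      (∫ s in (0 : ℝ)..1, s ^ (n + 1) • deriv f (s * t)) t := by
  obtain ⟨K, hK⟩ := ((isCompact_Icc (a := (0 : ℝ)) (b := 1)).prod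
    (isCompact_closedBall t 1)).exists_bound_of_continuousOn
    (f := fun q : ℝ × ℝ => q.1 ^ (n + 1) • deriv f (q.1 * q.2)) (by fun_prop)
  refine (intervalIntegral.hasDerivAt_integral_of_dominated_loc_of_deriv_le
    (F' := fun t s => s ^ (n + 1) • deriv f (s * t)) (bound := fun _ => K)
    (Metric.closedBall_mem_nhds t one_pos) (Eventually.of_forall fun x => by fun_prop)
    (Continuous.intervalIntegrable (by fun_prop) 0 1) (by fun_prop) ?_
    intervalIntegrable_const ?_).2
  · refine Eventually.of_forall fun s hs x hx => hK (s, x) ⟨?_, hx⟩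
    rw [Set.uIoc_of_le zero_le_one] at hs
    exact Set.Ioc_subset_Icc_self hs
  · refine Eventually.of_forall fun s _ x _ => ?_
    have hinner : HasDerivAt (fun x => s * x) s x := by simpa using (hasDerivAt_id x).const_mul s
    have hcomp : HasDerivAt (fun x => f (s * x)) (s • deriv f (s * x)) x :=
      HasDerivAt.scomp x (hf.differentiable one_ne_zero (s * x)).hasDerivAt hinner
    exact (hcomp.const_smul (s ^ n)).congr_deriv (by rw [smul_smul, pow_succ])

theorem contDiff_integral_comp_mul {f : ℝ → F} (hf : ContDiff ℝ ∞ f) :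
    ContDiff ℝ ∞ fun t => ∫ s in (0 : ℝ)..1, f (s * t) := by
  have hderiv (n : ℕ) (t : ℝ) :
      HasDerivAt (fun t => ∫ s in (0 : ℝ)..1, s ^ n • iteratedDeriv n f (s * t))
        (∫ s in (0 : ℝ)..1, s ^ (n + 1) • iteratedDeriv (n + 1) f (s * t)) t := by
    rw [iteratedDeriv_succ]
    exact hasDerivAt_integral_pow_smul_comp_mul
      ((contDiff_infty_iteratedDeriv hf n).of_le (by simp)) n t
  simpa using contDiff_infty_of_forall_hasDerivAt hderiv 0

theorem exists_hasCompactSupport_iteratedDeriv_eq_single (n : ℕ) (a : F) :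
    ∃ ψ : ℝ → F, ContDiff ℝ ∞ ψ ∧ HasCompactSupport ψ ∧
      ∀ k, iteratedDeriv k ψ 0 = (Pi.single n a : ℕ → F) k := by
  let χ : ContDiffBump (0 : ℝ) := ⟨1, 2, one_pos, one_lt_two⟩
  let monomial : ℝ → F := fun t => t ^ n • (n.factorial : ℝ)⁻¹ • a
  have hmonomial : ContDiff ℝ ∞ monomial := by fun_prop
  refine ⟨fun t => χ t • monomial t, χ.contDiff.smul hmonomial,
    χ.hasCompactSupport.smul_right, fun k => ?_⟩
  have heq : (fun t => χ t • monomial t) =ᶠ[𝓝 0] monomial := by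
    filter_upwards [χ.eventuallyEq_one] with t ht
    rw [ht, Pi.one_apply, one_smul]
  rw [heq.iteratedDeriv_eq k, iteratedDeriv_smul_const (by fun_prop), iteratedDeriv_fun_pow_zero]
  rcases eq_or_ne k n with rfl | hkn
  · simp [k.factorial_ne_zero]
  · simp [hkn]

theorem exists_norm_iteratedDeriv_le_of_hasCompactSupport {ψ : ℝ → F} (hψ : ContDiff ℝ ∞ ψ)
    (hsupp : HasCompactSupport ψ) (n : ℕ) : ∃ C, ∀ t, ‖iteratedDeriv n ψ t‖ ≤ C := by
  simp only [← norm_iteratedFDeriv_eq_norm_iteratedDeriv]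
  exact (hψ.continuous_iteratedFDeriv (by exact_mod_cast le_top)).bounded_above_of_compact_support
    (hsupp.iteratedFDeriv n)

/-- Rescaling a bump with prescribed `n`-jet at `0` by a large factor makes its derivatives of
order less than `n` uniformly small. -/
theorem exists_small_iteratedDeriv_eq_single (n : ℕ) (a : F) {ε : ℝ} (hε : 0 < ε) :
    ∃ u : ℝ → F, ContDiff ℝ ∞ u ∧ (∀ k, iteratedDeriv k u 0 = (Pi.single n a : ℕ → F) k) ∧
      (∀ k, ∃ C, ∀ t, ‖iteratedDeriv k u t‖ ≤ C) ∧ ∀ k < n, ∀ t, ‖iteratedDeriv k u t‖ ≤ ε := by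
  obtain ⟨ψ, hψ, hsupp, hjet⟩ := exists_hasCompactSupport_iteratedDeriv_eq_single n a
  choose C hC using exists_norm_iteratedDeriv_le_of_hasCompactSupport hψ hsupp
  have hC0 (k : ℕ) : 0 ≤ C k := (norm_nonneg _).trans (hC k 0)
  set M := ∑ k ∈ Finset.range n, C k with hM
  have hM0 : 0 ≤ M := Finset.sum_nonneg fun k _ => hC0 k
  set r := M / ε + 1 with hr
  have hr1 : 1 ≤ r := le_add_of_nonneg_left (by positivity)
  have hr0 : 0 < r := one_pos.trans_le hr1
  have hderiv (k : ℕ) (t : ℝ) : iteratedDeriv k (fun t => (r ^ n)⁻¹ • ψ (r * t)) t =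
      (r ^ n)⁻¹ • r ^ k • iteratedDeriv k ψ (r * t) := by
    rw [iteratedDeriv_fun_const_smul_field,
      iteratedDeriv_comp_const_smul (hψ.of_le (by exact_mod_cast le_top))]
  have hnorm (k : ℕ) (t : ℝ) : ‖iteratedDeriv k (fun t => (r ^ n)⁻¹ • ψ (r * t)) t‖ ≤
      (r ^ n)⁻¹ * (r ^ k * C k) := by
    rw [hderiv, norm_smul, norm_smul, Real.norm_of_nonneg (by positivity),
      Real.norm_of_nonneg (by positivity)]
    gcongr
    exact hC k _
  refine ⟨fun t => (r ^ n)⁻¹ • ψ (r * t), by fun_prop, fun k => ?_, fun k => ⟨_, hnorm k⟩,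
    fun k hk t => (hnorm k t).trans ?_⟩
  · rw [hderiv, mul_zero, hjet]
    rcases eq_or_ne k n with rfl | hkn
    · simp [smul_smul, (pow_pos hr0 k).ne']
    · simp [hkn]
  · have hCM : C k ≤ M := Finset.single_le_sum (fun j _ => hC0 j) (Finset.mem_range.2 hk)
    have hpow : r ^ k * r ≤ r ^ n := by
      rw [← pow_succ]
      exact pow_le_pow_right₀ hr1 hk
    have hMr : M ≤ r * ε := by
      rw [hr, add_mul, div_mul_cancel₀ _ hε.ne']
      linarith
    rw [inv_mul_le_iff₀ (by positivity)]
    calc r ^ k * C k ≤ r ^ k * (r * ε) := by gcongr; exact hCM.trans hMr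
      _ = r ^ k * r * ε := by ring
      _ ≤ r ^ n * ε := by gcongr

variable [CompleteSpace F]

/-- Hadamard's lemma; the quotient is `∫₀¹ f'(st) ds`. -/
theorem exists_contDiff_eq_smul {f : ℝ → F} (hf : ContDiff ℝ ∞ f) (h0 : f 0 = 0) :
    ∃ q : ℝ → F, ContDiff ℝ ∞ q ∧ ∀ t, f t = t • q t := by
  have hf' : ContDiff ℝ ∞ (deriv f) := hf.iterate_deriv 1
  have hcont : Continuous (deriv f) := hf'.continuous
  refine ⟨_, contDiff_integral_comp_mul hf', fun t => ?_⟩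
  have hFTC := intervalIntegral.integral_unitInterval_deriv_eq_sub (f := f) (f' := deriv f)
    (z₀ := 0) (z₁ := t) (by fun_prop) fun s _ => hasDerivAt_of_contDiff_infty hf _
  simpa [h0] using hFTC.symm

theorem exists_even_contDiff_eq_smul_of_odd {f : ℝ → F} (hf : ContDiff ℝ ∞ f) (hodd : f.Odd) :
    ∃ q : ℝ → F, ContDiff ℝ ∞ q ∧ q.Even ∧ ∀ t, f t = t • q t := by
  have : IsAddTorsionFree F := .of_isTorsionFree ℝ F
  obtain ⟨q, hq, hfq⟩ := exists_contDiff_eq_smul hf hodd.map_zero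
  refine ⟨q, hq, fun t => ?_, hfq⟩
  rcases eq_or_ne t 0 with rfl | ht
  · rw [neg_zero]
  · have hneg := hodd t
    rw [hfq, hfq, neg_smul, neg_inj] at hneg
    exact (isUnit_iff_ne_zero.2 ht).smul_left_cancel.1 hneg

theorem hasDerivAt_tsum_iteratedDeriv {u : ℕ → ℝ → F} {v : ℕ → ℕ → ℝ}
    (hu : ∀ n, ContDiff ℝ ∞ (u n)) (hv : ∀ k, Summable (v k))
    (huv : ∀ k n t, ‖iteratedDeriv k (u n) t‖ ≤ v k n) (k : ℕ) (t : ℝ) :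
    HasDerivAt (fun t => ∑' n, iteratedDeriv k (u n) t) (∑' n, iteratedDeriv (k + 1) (u n) t) t :=
  hasDerivAt_tsum (hv (k + 1)) (fun n t => hasDerivAt_iteratedDeriv (hu n) k t) (huv (k + 1))
    (Summable.of_norm_bounded (hv k) fun n => huv k n 0) t

/-- Borel's lemma. -/
theorem exists_contDiff_iteratedDeriv_eq (a : ℕ → F) :
    ∃ f : ℝ → F, ContDiff ℝ ∞ f ∧ ∀ n, iteratedDeriv n f 0 = a n := by
  choose u hu hjet hbdd hsmall using fun n =>
    exists_small_iteratedDeriv_eq_single n (a n) (pow_pos (one_half_pos (α := ℝ)) n)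
  choose C hC using hbdd
  let v : ℕ → ℕ → ℝ := fun k n => if k < n then (1 / 2) ^ n else C n k
  have hv (k : ℕ) : Summable (v k) := by
    refine summable_geometric_two.congr_atTop ?_
    filter_upwards [eventually_gt_atTop k] with n hn
    exact (if_pos hn).symm
  have huv (k n : ℕ) (t : ℝ) : ‖iteratedDeriv k (u n) t‖ ≤ v k n := by
    by_cases hkn : k < n
    · simpa only [v, if_pos hkn] using hsmall n k hkn t
    · simpa only [v, if_neg hkn] using hC n k t
  have hderiv := hasDerivAt_tsum_iteratedDeriv hu hv huv
  refine ⟨_, contDiff_infty_of_forall_hasDerivAt hderiv 0, fun k => ?_⟩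
  rw [iteratedDeriv_eq_of_forall_hasDerivAt hderiv]
  simp only [hjet]
  rw [tsum_eq_single k fun n hn => Pi.single_eq_of_ne hn.symm _, Pi.single_eq_same]

end SmoothCurves

section EvenFunctions

variable {F : Type*} [NormedAddCommGroup F] [NormedSpace ℝ F]

theorem odd_deriv_of_even {h : ℝ → F} (heven : h.Even) : (deriv h).Odd := fun x => by
  have hcomp : (fun x => h (-x)) = h := funext heven
  rw [← neg_eq_iff_eq_neg, ← deriv_comp_neg h x, hcomp]

theorem hasDerivAt_comp_sqrt {h k : ℝ → F} (hh : ContDiff ℝ ∞ h)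
    (hk : ∀ x, deriv h x = (2 * x) • k x) {t : ℝ} (ht : 0 < t) :
    HasDerivAt (fun t => h (√t)) (k √t) t := by
  have hsqrt : √t ≠ 0 := (Real.sqrt_pos.2 ht).ne'
  refine (HasDerivAt.scomp t (hasDerivAt_of_contDiff_infty hh √t)
    (Real.hasDerivAt_sqrt ht.ne')).congr_deriv ?_
  rw [hk, smul_smul, one_div_mul_cancel (mul_ne_zero two_ne_zero hsqrt), one_smul]

theorem continuous_ite_comp_sqrt {X : Type*} [TopologicalSpace X] {h b : ℝ → X}
    (hh : Continuous h) (hb : Continuous b) (h0 : b 0 = h 0) :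
    Continuous fun t => if 0 ≤ t then h (√t) else b t := by
  refine Continuous.if_le (hh.comp Real.continuous_sqrt) hb continuous_const continuous_id ?_
  intro x (hx : 0 = x)
  rw [← hx, Real.sqrt_zero, h0]

/-- Off `0` the derivative is computed on each side; at `0` it follows since both the function
and the candidate derivative are continuous there. -/
theorem hasDerivAt_ite_comp_sqrt {h k b : ℝ → F} (hh : ContDiff ℝ ∞ h) (hkc : Continuous k)
    (hk : ∀ x, deriv h x = (2 * x) • k x) (hb : ContDiff ℝ ∞ b) (hb0 : b 0 = h 0)
    (hb1 : deriv b 0 = k 0) (t : ℝ) :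
    HasDerivAt (fun t => if 0 ≤ t then h (√t) else b t)
      (if 0 ≤ t then k (√t) else deriv b t) t := by
  refine hasDerivAt_of_hasDerivAt_of_ne' (x := 0)
    (g := fun t => if 0 ≤ t then k (√t) else deriv b t) (fun t ht => ?_)
    (continuous_ite_comp_sqrt hh.continuous hb.continuous hb0).continuousAt
    (continuous_ite_comp_sqrt hkc (hb.iterate_deriv 1).continuous hb1).continuousAt t
  rcases ht.lt_or_gt with hneg | hpos
  · rw [if_neg hneg.not_ge]
    refine (hasDerivAt_of_contDiff_infty hb t).congr_of_eventuallyEq ?_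
    filter_upwards [Iio_mem_nhds hneg] with s hs
    exact if_neg (not_le.2 hs)
  · rw [if_pos hpos.le]
    refine (hasDerivAt_comp_sqrt hh hk hpos).congr_of_eventuallyEq ?_
    filter_upwards [Ioi_mem_nhds hpos] with s hs
    exact if_pos (le_of_lt hs)

variable [CompleteSpace F]

theorem exists_even_contDiff_deriv_eq_smul {h : ℝ → F} (hh : ContDiff ℝ ∞ h) (heven : h.Even) :
    ∃ k : ℝ → F, (ContDiff ℝ ∞ k ∧ k.Even) ∧ ∀ x, deriv h x = (2 * x) • k x := by
  obtain ⟨q, hq, hqeven, hhq⟩ :=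
    exists_even_contDiff_eq_smul_of_odd (hh.iterate_deriv 1) (odd_deriv_of_even heven)
  refine ⟨fun x => (2⁻¹ : ℝ) • q x, ⟨by fun_prop, fun x => by simp only [hqeven x]⟩, fun x => ?_⟩
  rw [← Function.iterate_one deriv, hhq, smul_smul]
  congr 1
  ring

theorem exists_seq_contDiff_deriv_eq_smul {h : ℝ → F} (hh : ContDiff ℝ ∞ h) (heven : h.Even) :
    ∃ H : ℕ → ℝ → F, H 0 = h ∧ (∀ n, ContDiff ℝ ∞ (H n)) ∧
      ∀ n x, deriv (H n) x = (2 * x) • H (n + 1) x := by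
  choose next hnext hderiv using fun h : {h : ℝ → F // ContDiff ℝ ∞ h ∧ h.Even} =>
    exists_even_contDiff_deriv_eq_smul h.2.1 h.2.2
  let H (n : ℕ) : {h : ℝ → F // ContDiff ℝ ∞ h ∧ h.Even} :=
    (fun h => ⟨next h, hnext h⟩)^[n] ⟨h, hh, heven⟩
  refine ⟨fun n => H n, rfl, fun n => (H n).2.1, fun n x => ?_⟩
  simp only [H, Function.iterate_succ_apply']
  exact hderiv _ x

/-- Whitney's theorem on even functions. Formally `E⁽ⁿ⁾(x²) = Hₙ(x)` for the sequence `Hₙ` defined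
by `Hₙ' = 2x Hₙ₊₁`; this determines `E` on `[0, ∞)`, and Borel's lemma extends it to the left. -/
theorem exists_contDiff_comp_sq_of_even {h : ℝ → F} (hh : ContDiff ℝ ∞ h) (heven : h.Even) :
    ∃ E : ℝ → F, ContDiff ℝ ∞ E ∧ ∀ x, h x = E (x ^ 2) := by
  obtain ⟨H, rfl, hH, hderiv⟩ := exists_seq_contDiff_deriv_eq_smul hh heven
  obtain ⟨b, hb, hb0⟩ := exists_contDiff_iteratedDeriv_eq fun n => H n 0
  let e (n : ℕ) (t : ℝ) : F := if 0 ≤ t then H n √t else iteratedDeriv n b t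
  have he (n : ℕ) (t : ℝ) : HasDerivAt (e n) (e (n + 1) t) t := by
    have hb1 : deriv (iteratedDeriv n b) 0 = H (n + 1) 0 := by rw [← iteratedDeriv_succ, hb0]
    simpa only [e, iteratedDeriv_succ] using hasDerivAt_ite_comp_sqrt (hH n)
      (hH (n + 1)).continuous (hderiv n) (contDiff_infty_iteratedDeriv hb n) (hb0 n) hb1 t
  refine ⟨e 0, contDiff_infty_of_forall_hasDerivAt he 0, fun x => ?_⟩
  rw [show e 0 (x ^ 2) = H 0 √(x ^ 2) from if_pos (sq_nonneg x), Real.sqrt_sq_eq_abs]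
  rcases abs_choice x with habs | habs
  · rw [habs]
  · rw [habs, heven x]

end EvenFunctions

section Cusps

variable {F : Type*} [NormedAddCommGroup F] [NormedSpace ℝ F]

theorem deriv_smul_of_left_eq_zero {w : ℝ → ℝ} {γ : ℝ → F} {a : ℝ} (hw : DifferentiableAt ℝ w a)
    (hγ : DifferentiableAt ℝ γ a) (ha : w a = 0) :
    deriv (fun t => w t • γ t) a = deriv w a • γ a := by
  rw [deriv_fun_smul hw hγ, ha, zero_smul, zero_add]

theorem iteratedDeriv_two_smul_of_left_eq_zero {w : ℝ → ℝ} {γ : ℝ → F} {a : ℝ}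
    (hw : ContDiffAt ℝ 2 w a) (hγ : ContDiffAt ℝ 2 γ a) (ha : w a = 0) :
    iteratedDeriv 2 (fun t => w t • γ t) a =
      iteratedDeriv 2 w a • γ a + (2 * deriv w a) • deriv γ a := by
  have hLeibniz := iteratedDerivWithin_smul (n := 2) (Set.mem_univ a) uniqueDiffOn_univ
    hw.contDiffWithinAt hγ.contDiffWithinAt
  simp only [iteratedDerivWithin_univ] at hLeibniz
  refine hLeibniz.trans ?_
  simp [Finset.sum_range_succ, ha, mul_smul, ← Nat.cast_smul_eq_nsmul ℝ, add_comm]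

/-- Both values come from the derivative of the curve being of the form `s • K s`. -/
theorem iteratedDeriv_comp_sq_add_cube_smul {E O : ℝ → F} (hE : ContDiff ℝ ∞ E)
    (hO : ContDiff ℝ ∞ O) :
    iteratedDeriv 2 (fun s => E (s ^ 2) + s ^ 3 • O (s ^ 2)) 0 = (2 : ℝ) • deriv E 0 ∧
      iteratedDeriv 3 (fun s => E (s ^ 2) + s ^ 3 • O (s ^ 2)) 0 = (6 : ℝ) • O 0 := by
  have hE' : ContDiff ℝ ∞ (deriv E) := hE.iterate_deriv 1
  have hsq (s : ℝ) : HasDerivAt (fun s : ℝ => s ^ 2) (2 * s) s := by simpa using hasDerivAt_pow 2 s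
  have hcomp {H : ℝ → F} (hH : ContDiff ℝ ∞ H) (s : ℝ) :
      HasDerivAt (fun s => H (s ^ 2)) ((2 * s) • deriv H (s ^ 2)) s :=
    HasDerivAt.scomp s (hasDerivAt_of_contDiff_infty hH _) (hsq s)
  let K (s : ℝ) : F :=
    (2 : ℝ) • deriv E (s ^ 2) + s • ((3 : ℝ) • O (s ^ 2) + (2 * s ^ 2) • deriv O (s ^ 2))
  have hK : ContDiff ℝ ∞ K := by fun_prop
  have hderiv : deriv (fun s => E (s ^ 2) + s ^ 3 • O (s ^ 2)) = fun s => id s • K s := by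
    funext s
    refine ((hcomp hE s).add ((hasDerivAt_pow 3 s).smul (hcomp hO s))).deriv.trans ?_
    simp only [K, id]
    module
  have hK0 : deriv K 0 = (3 : ℝ) • O 0 := by
    have hH : ContDiff ℝ ∞ fun s => (3 : ℝ) • O (s ^ 2) + (2 * s ^ 2) • deriv O (s ^ 2) := by
      fun_prop
    refine (((hcomp hE' 0).const_smul (2 : ℝ)).add ((hasDerivAt_id (0 : ℝ)).smul
      (hasDerivAt_of_contDiff_infty hH 0))).deriv.trans ?_
    simp
  constructor
  · rw [iteratedDeriv_succ', iteratedDeriv_one, hderiv, deriv_smul_of_left_eq_zero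
      differentiableAt_id (hK.differentiable (by simp) 0) rfl]
    simp [K]
  · rw [iteratedDeriv_succ', hderiv, iteratedDeriv_two_smul_of_left_eq_zero contDiffAt_id
      (contDiff_infty.1 hK 2).contDiffAt rfl, hK0]
    norm_num [smul_smul, iteratedDeriv_id]

variable [CompleteSpace F]

theorem exists_contDiff_eq_comp_sq_add_smul_comp_sq {f : ℝ → F} (hf : ContDiff ℝ ∞ f) :
    ∃ E O : ℝ → F, ContDiff ℝ ∞ E ∧ ContDiff ℝ ∞ O ∧ ∀ s, f s = E (s ^ 2) + s • O (s ^ 2) := by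
  obtain ⟨E, hE, hfE⟩ := exists_contDiff_comp_sq_of_even
    (h := fun s => (2⁻¹ : ℝ) • (f s + f (-s))) (by fun_prop) fun s => by
      simp only [neg_neg, add_comm]
  obtain ⟨k, hk, hkeven, hfk⟩ := exists_even_contDiff_eq_smul_of_odd
    (f := fun s => (2⁻¹ : ℝ) • (f s - f (-s))) (by fun_prop) fun s => by
      simp only [neg_neg, ← smul_neg, neg_sub]
  obtain ⟨O, hO, hkO⟩ := exists_contDiff_comp_sq_of_even hk hkeven
  refine ⟨E, O, hE, hO, fun s => ?_⟩
  rw [← hfE, ← hkO, ← hfk]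
  module

/-- If the first derivative vanishes, so does `O 0` in the decomposition
`f s = E (s²) + s • O (s²)`, and Hadamard's lemma extracts the remaining factor `s²`. -/
theorem exists_contDiff_eq_comp_sq_add_cube_smul {f : ℝ → F} (hf : ContDiff ℝ ∞ f)
    (h0 : deriv f 0 = 0) :
    ∃ E O : ℝ → F, ContDiff ℝ ∞ E ∧ ContDiff ℝ ∞ O ∧
      f = fun s => E (s ^ 2) + s ^ 3 • O (s ^ 2) := by
  obtain ⟨E, K, hE, hK, hEK⟩ := exists_contDiff_eq_comp_sq_add_smul_comp_sq hf
  have hsq : HasDerivAt (fun s : ℝ => s ^ 2) 0 0 := by simpa using hasDerivAt_pow 2 (0 : ℝ)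
  have hK0 : K 0 = 0 := by
    have hE' := HasDerivAt.scomp (0 : ℝ) (hasDerivAt_of_contDiff_infty hE _) hsq
    have hK' := (hasDerivAt_id (0 : ℝ)).smul
      (HasDerivAt.scomp (0 : ℝ) (hasDerivAt_of_contDiff_infty hK _) hsq)
    have hderiv := ((hE'.add hK').congr_of_eventuallyEq (.of_forall hEK)).deriv
    simpa [h0] using hderiv.symm
  obtain ⟨O, hO, hKO⟩ := exists_contDiff_eq_smul hK hK0
  refine ⟨E, O, hE, hO, funext fun s => ?_⟩
  rw [hEK, hKO, smul_smul, ← pow_succ']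

theorem exists_contDiff_comp_const_add_eq_of_deriv_eq_zero {f : ℝ → F} (hf : ContDiff ℝ ∞ f)
    {a : ℝ} (ha : deriv f a = 0) :
    ∃ E O : ℝ → F, ContDiff ℝ ∞ E ∧ ContDiff ℝ ∞ O ∧
      (∀ s, f (a + s) = E (s ^ 2) + s ^ 3 • O (s ^ 2)) ∧
      iteratedDeriv 2 f a = (2 : ℝ) • deriv E 0 ∧ iteratedDeriv 3 f a = (6 : ℝ) • O 0 := by
  obtain ⟨E, O, hE, hO, hEO⟩ := exists_contDiff_eq_comp_sq_add_cube_smul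
    (f := fun s => f (a + s)) (by fun_prop) (by simpa only [deriv_comp_const_add, add_zero])
  refine ⟨E, O, hE, hO, congrFun hEO, ?_⟩
  simpa only [← hEO, iteratedDeriv_comp_const_add, add_zero] using
    iteratedDeriv_comp_sq_add_cube_smul hE hO

end Cusps

section LocalDiffeomorphisms

variable {E F : Type*} [NormedAddCommGroup E] [NormedSpace ℝ E] [NormedAddCommGroup F]
  [NormedSpace ℝ F]

theorem IsLocalDiffeoAt.continuousAt {Φ : E → F} {p : E} (hΦ : IsLocalDiffeoAt Φ p) :
    ContinuousAt Φ p := by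
  obtain ⟨U, V, Ψ, hU, hpU, -, -, hΦU, -⟩ := hΦ
  exact hΦU.continuousOn.continuousAt (hU.mem_nhds hpU)

theorem IsLocalDiffeoAt.exists_leftInverse {Φ : E → F} {p : E} (hΦ : IsLocalDiffeoAt Φ p) :
    ∃ Ψ : F → E, IsLocalDiffeoAt Ψ (Φ p) ∧ ∀ᶠ x in 𝓝 p, Ψ (Φ x) = x := by
  obtain ⟨U, V, Ψ, hU, hpU, hV, hpV, hΦU, hΨV, hmapsΦ, hmapsΨ, hleft, hright⟩ := hΦ
  exact ⟨Ψ, ⟨V, U, Φ, hV, hpV, hU, hmapsΨ hpV, hΨV, hΦU, hmapsΨ, hmapsΦ, hright, hleft⟩,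
    Filter.mem_of_superset (hU.mem_nhds hpU) hleft⟩

/-- The inverse function theorem. The source is shrunk to the points where the derivative is
invertible, so that the inverse is smooth on the whole target. -/
theorem isLocalDiffeoAt_of_hasFDerivAt [CompleteSpace E] {G : E → F} (hG : ContDiff ℝ ∞ G) {p : E}
    {L : E ≃L[ℝ] F} (hL : HasFDerivAt G (L : E →L[ℝ] F) p) : IsLocalDiffeoAt G p := by
  have hn : (∞ : WithTop ℕ∞) ≠ 0 := by simp
  have hopen : IsOpen {x | ∃ L' : E ≃L[ℝ] F, (L' : E →L[ℝ] F) = fderiv ℝ G x} :=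
    ContinuousLinearEquiv.isOpen.preimage (hG.continuous_fderiv hn)
  let e := hG.contDiffAt.toOpenPartialHomeomorph G hL hn
  let h := e.restrOpen _ hopen
  have hp : p ∈ h.source := by
    rw [e.restrOpen_source]
    exact ⟨hG.contDiffAt.mem_toOpenPartialHomeomorph_source hL hn, L, hL.fderiv.symm⟩
  have hsymm : ContDiffOn ℝ ∞ h.symm h.target := fun y hy => by
    have hys := h.map_target hy
    rw [e.restrOpen_source] at hys
    obtain ⟨-, L', hL'⟩ := hys
    refine (h.contDiffAt_symm (f₀' := L') hy ?_ hG.contDiffAt).contDiffWithinAt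
    rw [hL']
    exact (hG.differentiable hn _).hasFDerivAt
  exact ⟨h.source, h.target, h.symm, h.open_source, hp, h.open_target, h.map_source hp,
    hG.contDiffOn, hsymm, h.mapsTo, h.mapsTo_symm, fun _ => h.left_inv, fun _ => h.right_inv⟩

end LocalDiffeomorphisms

theorem AEquiv.of_eventuallyEq_comp {f₁ f₂ : R2 → R3} {p : R2} {Φ : R2 → R2} {G : R3 → R3}
    (hΦ : IsLocalDiffeoAt Φ p) (hG : IsLocalDiffeoAt G (f₂ (Φ p))) (hf₂ : ContinuousAt f₂ (Φ p))
    (h : f₁ =ᶠ[𝓝 p] fun q => G (f₂ (Φ q))) : AEquiv f₁ p f₂ (Φ p) := by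
  obtain ⟨Ψ, hΨ, hleft⟩ := hG.exists_leftInverse
  have hΨf : ∀ᶠ q in 𝓝 p, Ψ (f₁ q) = f₂ (Φ q) := by
    filter_upwards [h, (hf₂.comp hΦ.continuousAt).eventually hleft] with q hq hΨq
    rw [hq]
    exact hΨq
  exact ⟨Φ, Ψ, hΦ, rfl, h.self_of_nhds ▸ hΨ, hΨf.self_of_nhds, hΨf⟩

theorem det3_smul_add_smul (a b c : R3) (r s t : ℝ) :
    det3 a (r • b) (s • b + t • c) = r * t * det3 a b c := by
  simp only [det3, Prod.smul_fst, Prod.smul_snd, Prod.fst_add, Prod.snd_add, smul_eq_mul]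
  ring

theorem eq_zero_of_smul_add_smul_add_smul_eq_zero {a b c : R3} (hdet : det3 a b c ≠ 0)
    {x y z : ℝ} (h : x • a + y • b + z • c = 0) : x = 0 ∧ y = 0 ∧ z = 0 := by
  have hx : det3 (x • a + y • b + z • c) b c = x * det3 a b c := by
    simp only [det3, Prod.smul_fst, Prod.smul_snd, Prod.fst_add, Prod.snd_add, smul_eq_mul]
    ring
  have hy : det3 a (x • a + y • b + z • c) c = y * det3 a b c := by
    simp only [det3, Prod.smul_fst, Prod.smul_snd, Prod.fst_add, Prod.snd_add, smul_eq_mul]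
    ring
  have hz : det3 a b (x • a + y • b + z • c) = z * det3 a b c := by
    simp only [det3, Prod.smul_fst, Prod.smul_snd, Prod.fst_add, Prod.snd_add, smul_eq_mul]
    ring
  have hzero : det3 0 b c = 0 ∧ det3 a 0 c = 0 ∧ det3 a b 0 = 0 := by simp [det3]
  rw [h] at hx hy hz
  exact ⟨(mul_eq_zero.1 (hx.symm.trans hzero.1)).resolve_right hdet,
    (mul_eq_zero.1 (hy.symm.trans hzero.2.1)).resolve_right hdet,
    (mul_eq_zero.1 (hz.symm.trans hzero.2.2)).resolve_right hdet⟩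

theorem exists_continuousLinearEquiv_of_det3_ne_zero {a b c : R3} (hdet : det3 a b c ≠ 0) :
    ∃ L : R3 ≃L[ℝ] R3, ∀ q : R3, L q = q.1 • a + q.2.1 • b + q.2.2 • c := by
  let ℓ : R3 →ₗ[ℝ] R3 := (LinearMap.toSpanSingleton ℝ R3 a).coprod
    ((LinearMap.toSpanSingleton ℝ R3 b).coprod (LinearMap.toSpanSingleton ℝ R3 c))
  have hℓ (q : R3) : ℓ q = q.1 • a + q.2.1 • b + q.2.2 • c := (add_assoc _ _ _).symm
  have hinj : Function.Injective ℓ := by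
    refine (injective_iff_map_eq_zero ℓ).2 fun q hq => ?_
    obtain ⟨hx, hy, hz⟩ := eq_zero_of_smul_add_smul_add_smul_eq_zero hdet ((hℓ q).symm.trans hq)
    exact Prod.ext hx (Prod.ext hy hz)
  exact ⟨(LinearEquiv.ofInjectiveEndo ℓ hinj).toContinuousLinearEquiv, hℓ⟩

/-- The ambient map carrying the standard cuspidal edge to the cusp `E (s²) + s³ • O (s²)` swept
along `B`. -/
def cuspidalEdgeChart (B E O : ℝ → R3) (q : R3) : R3 :=
  B q.1 + (E q.2.1 + q.2.2 • O q.2.1)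

theorem isLocalDiffeoAt_cuspidalEdgeChart {B E O : ℝ → R3} (hB : ContDiff ℝ ∞ B)
    (hE : ContDiff ℝ ∞ E) (hO : ContDiff ℝ ∞ O) (hdet : det3 (deriv B 0) (deriv E 0) (O 0) ≠ 0) :
    IsLocalDiffeoAt (cuspidalEdgeChart B E O) (0, 0, 0) := by
  obtain ⟨L, hL⟩ := exists_continuousLinearEquiv_of_det3_ne_zero hdet
  have hfst : HasFDerivAt (fun q : R3 => q.1) (ContinuousLinearMap.fst ℝ ℝ R2) (0, 0, 0) :=
    hasFDerivAt_fst
  have hmid : HasFDerivAt (fun q : R3 => q.2.1) ((ContinuousLinearMap.fst ℝ ℝ ℝ).comp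
    (ContinuousLinearMap.snd ℝ ℝ R2)) (0, 0, 0) := hasFDerivAt_snd.fst
  have hlast : HasFDerivAt (fun q : R3 => q.2.2) ((ContinuousLinearMap.snd ℝ ℝ ℝ).comp
    (ContinuousLinearMap.snd ℝ ℝ R2)) (0, 0, 0) := hasFDerivAt_snd.snd
  have hcurve {H : ℝ → R3} (hH : ContDiff ℝ ∞ H) :=
    (hasDerivAt_of_contDiff_infty hH 0).hasFDerivAt
  have hchart := ((hcurve hB).comp (0, 0, 0) hfst).add
    (((hcurve hE).comp (0, 0, 0) hmid).add (hlast.smul ((hcurve hO).comp (0, 0, 0) hmid)))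
  refine isLocalDiffeoAt_of_hasFDerivAt (L := L) ?_
    (hchart.congr_fderiv (ContinuousLinearMap.ext fun q => ?_))
  · unfold cuspidalEdgeChart
    fun_prop
  · simp [hL, add_assoc]

/-- The sum of a regular curve and a curve with an ordinary cusp is a cuspidal edge. The
isomorphism `e` names the parameters, so that either summand may depend on either variable. -/
theorem aEquiv_fCE_of_eq_add {f : R2 → R3} {A B : ℝ → R3} (hA : ContDiff ℝ ∞ A)
    (hB : ContDiff ℝ ∞ B) (e : R2 ≃L[ℝ] R2) (hf : ∀ q, f q = B (e q).1 + A (e q).2) {p : R2}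
    (hA' : deriv A (e p).2 = 0)
    (hdet : det3 (deriv B (e p).1) (iteratedDeriv 2 A (e p).2) (iteratedDeriv 3 A (e p).2) ≠ 0) :
    AEquiv f p fCE (0, 0) := by
  obtain ⟨E, O, hE, hO, hEO, hE0, hO0⟩ :=
    exists_contDiff_comp_const_add_eq_of_deriv_eq_zero hA hA'
  have hdet' : det3 (deriv B (e p).1) (deriv E 0) (O 0) ≠ 0 := by
    have hsmul := det3_smul_add_smul (deriv B (e p).1) (deriv E 0) (O 0) 2 0 6
    rw [zero_smul, zero_add, ← hE0, ← hO0] at hsmul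
    exact right_ne_zero_of_mul (hsmul ▸ hdet)
  have hΦ : IsLocalDiffeoAt (fun q => e q - e p) p :=
    isLocalDiffeoAt_of_hasFDerivAt (by fun_prop) (e.hasFDerivAt.sub_const (e p))
  have hΦp : e p - e p = (0, 0) := sub_self _
  have hfCE : fCE (0, 0) = (0, 0, 0) := by simp [fCE]
  have hG : IsLocalDiffeoAt (cuspidalEdgeChart (fun s => B ((e p).1 + s)) E O) (fCE (e p - e p)) :=
    hΦp ▸ hfCE ▸ isLocalDiffeoAt_cuspidalEdgeChart (by fun_prop) hE hO
      (by simpa only [deriv_comp_const_add, add_zero])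
  have hfactor (q : R2) :
      f q = cuspidalEdgeChart (fun s => B ((e p).1 + s)) E O (fCE (e q - e p)) := by
    simp [cuspidalEdgeChart, fCE, hf q, ← hEO]
  rw [← hΦp]
  refine AEquiv.of_eventuallyEq_comp hΦ hG (Continuous.continuousAt ?_) (.of_forall hfactor)
  unfold fCE
  fun_prop

theorem aEquiv_fCE_of_deriv_eq_smul {f : R2 → R3} {A B γ : ℝ → R3} {w : ℝ → ℝ}
    (hA : ContDiff ℝ ∞ A) (hB : ContDiff ℝ ∞ B) (hγ : ContDiff ℝ ∞ γ) (hw : ContDiff ℝ ∞ w)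
    (e : R2 ≃L[ℝ] R2) (hf : ∀ q, f q = B (e q).1 + A (e q).2) {p : R2}
    (hA' : ∀ t, deriv A t = w t • γ t) (hw0 : w (e p).2 = 0) (hw1 : deriv w (e p).2 ≠ 0)
    (hdet : det3 (deriv B (e p).1) (γ (e p).2) (deriv γ (e p).2) ≠ 0) :
    AEquiv f p fCE (0, 0) := by
  refine aEquiv_fCE_of_eq_add hA hB e hf (by rw [hA', hw0, zero_smul]) ?_
  rw [iteratedDeriv_succ', iteratedDeriv_one, iteratedDeriv_succ', funext hA',
    deriv_smul_of_left_eq_zero (hw.differentiable (by simp) _) (hγ.differentiable (by simp) _) hw0,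
    iteratedDeriv_two_smul_of_left_eq_zero (contDiff_infty.1 hw 2).contDiffAt
      (contDiff_infty.1 hγ 2).contDiffAt hw0, det3_smul_add_smul]
  positivity

theorem ne_zero_of_fderiv_comp_mul_ne_zero {E : Type*} [NormedAddCommGroup E] [NormedSpace ℝ E]
    {w : ℝ → ℝ} {r : E → ℝ} {p : E} (ℓ : E →L[ℝ] ℝ) (hw : DifferentiableAt ℝ w (ℓ p))
    (hr : DifferentiableAt ℝ r p) (hwp : w (ℓ p) = 0)
    (h : fderiv ℝ (fun q => w (ℓ q) * r q) p ≠ 0) : deriv w (ℓ p) ≠ 0 ∧ r p ≠ 0 := by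
  have hwℓ : HasFDerivAt (fun q => w (ℓ q)) (deriv w (ℓ p) • ℓ) p :=
    hw.hasDerivAt.comp_hasFDerivAt p ℓ.hasFDerivAt
  rw [(hwℓ.fun_mul hr.hasFDerivAt).fderiv, hwp, zero_smul, zero_add, smul_ne_zero_iff,
    smul_ne_zero_iff] at h
  exact ⟨h.2.1, h.1⟩

section Lightlike

/-- The light-like direction of `f_u` where `g1` takes the value `x`, normalized so that
`f_u = ω1 • lightlikeU g1`. -/
def lightlikeU (x : ℝ) : R3 := ((-1 - x ^ 2) / 2, (1 - x ^ 2) / 2, x)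

/-- The light-like direction of `f_v` where `g2` takes the value `y`, normalized so that
`f_v = ω2 • lightlikeV g2`. -/
def lightlikeV (y : ℝ) : R3 := ((1 + y ^ 2) / 2, (1 - y ^ 2) / 2, -y)

theorem contDiff_lightlikeU : ContDiff ℝ ∞ lightlikeU := by
  unfold lightlikeU
  fun_prop

theorem contDiff_lightlikeV : ContDiff ℝ ∞ lightlikeV := by
  unfold lightlikeV
  fun_prop

theorem hasDerivAt_lightlikeU (x : ℝ) : HasDerivAt lightlikeU (-x, -x, 1) x := by
  have hsq := hasDerivAt_pow 2 x
  refine (((hsq.const_sub (-1)).div_const 2).prodMk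
    (((hsq.const_sub 1).div_const 2).prodMk (hasDerivAt_id x))).congr_deriv ?_
  ext <;> dsimp <;> ring

theorem hasDerivAt_lightlikeV (y : ℝ) : HasDerivAt lightlikeV (y, -y, -1) y := by
  have hsq := hasDerivAt_pow 2 y
  refine (((hsq.const_add 1).div_const 2).prodMk
    (((hsq.const_sub 1).div_const 2).prodMk (hasDerivAt_neg y))).congr_deriv ?_
  ext <;> dsimp <;> ring

theorem deriv_lightlikeU_comp {g : ℝ → ℝ} {t : ℝ} (hg : DifferentiableAt ℝ g t) :
    deriv (lightlikeU ∘ g) t = deriv g t • (-g t, -g t, 1) :=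
  ((hasDerivAt_lightlikeU (g t)).scomp t hg.hasDerivAt).deriv

theorem deriv_lightlikeV_comp {g : ℝ → ℝ} {t : ℝ} (hg : DifferentiableAt ℝ g t) :
    deriv (lightlikeV ∘ g) t = deriv g t • (g t, -g t, -1) :=
  ((hasDerivAt_lightlikeV (g t)).scomp t hg.hasDerivAt).deriv

theorem det3_smul_lightlikeV_lightlikeU (x y r s : ℝ) :
    det3 (r • lightlikeV y) (lightlikeU x) (s • (-x, -x, 1)) = r * s * (1 - x * y) ^ 2 / 2 := by
  simp only [det3, lightlikeU, lightlikeV, Prod.smul_fst, Prod.smul_snd, smul_eq_mul]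
  ring

theorem det3_smul_lightlikeU_lightlikeV (x y r s : ℝ) :
    det3 (r • lightlikeU x) (lightlikeV y) (s • (y, -y, -1)) = r * s * (1 - x * y) ^ 2 / 2 := by
  simp only [det3, lightlikeU, lightlikeV, Prod.smul_fst, Prod.smul_snd, smul_eq_mul]
  ring

end Lightlike

section GaussMap

theorem gaussNormSq_pos (x y : ℝ) : 0 < (1 - x * y) ^ 2 + 2 * (x + y) ^ 2 := by
  nlinarith [sq_nonneg (1 + x * y), sq_nonneg (x + y), sq_nonneg x, sq_nonneg y]

theorem differentiable_sqrt_gaussNormSq :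
    Differentiable ℝ fun z : R2 => √((1 - z.1 * z.2) ^ 2 + 2 * (z.1 + z.2) ^ 2) := fun z =>
  DifferentiableAt.sqrt (by fun_prop) (ne_of_gt (gaussNormSq_pos z.1 z.2))

/-- The canonical unit normal as a function of the values `z = (g1, g2)`. -/
def normalOfGauss (z : R2) : R3 :=
  (√((1 - z.1 * z.2) ^ 2 + 2 * (z.1 + z.2) ^ 2))⁻¹ • (z.1 + z.2, -z.1 + z.2, 1 + z.1 * z.2)

theorem differentiable_normalOfGauss : Differentiable ℝ normalOfGauss := fun z =>
  ((differentiable_sqrt_gaussNormSq z).inv (sqrt_pos.2 (gaussNormSq_pos z.1 z.2)).ne').smul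
    (by fun_prop)

/-- The area density of a generalized timelike minimal surface divided by `ω1 ω2`, as a function
of the values `z = (g1, g2)`. -/
def reducedAreaDensity (z : R2) : ℝ :=
  (z.1 * z.2 - 1) * √((1 - z.1 * z.2) ^ 2 + 2 * (z.1 + z.2) ^ 2) / 2

theorem differentiable_reducedAreaDensity : Differentiable ℝ reducedAreaDensity := by
  have hsqrt := differentiable_sqrt_gaussNormSq
  unfold reducedAreaDensity
  fun_prop

theorem det3_smul_lightlike_normalOfGauss (z : R2) (r s : ℝ) :
    det3 (r • lightlikeU z.1) (s • lightlikeV z.2) (normalOfGauss z) =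
      r * (s * reducedAreaDensity z) := by
  have hpos := gaussNormSq_pos z.1 z.2
  simp only [det3, lightlikeU, lightlikeV, normalOfGauss, reducedAreaDensity, Prod.smul_fst,
    Prod.smul_snd, smul_eq_mul]
  field_simp
  rw [sq_sqrt hpos.le]
  ring

theorem one_sub_mul_ne_zero_of_reducedAreaDensity_ne_zero {x y : ℝ}
    (hxy : reducedAreaDensity (x, y) ≠ 0) : 1 - x * y ≠ 0 := fun h =>
  hxy (by simp [reducedAreaDensity, ← neg_sub 1 (x * y), h])

end GaussMap

section Surface

variable {f : R2 → R3} {g1 g2 w1 w2 : ℝ → ℝ} {p : R2}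

theorem hasDerivAt_pu (hf : Differentiable ℝ f) (u v : ℝ) :
    HasDerivAt (fun s => f (s, v)) (pu f (u, v)) u :=
  (hf (u, v)).hasFDerivAt.comp_hasDerivAt u ((hasDerivAt_id u).prodMk (hasDerivAt_const u v))

theorem hasDerivAt_pv (hf : Differentiable ℝ f) (u v : ℝ) :
    HasDerivAt (fun s => f (u, s)) (pv f (u, v)) v :=
  (hf (u, v)).hasFDerivAt.comp_hasDerivAt v ((hasDerivAt_const v u).prodMk (hasDerivAt_id v))

theorem IsFrontAt.eq_zero_of_fderiv_eq_zero (hfront : IsFrontAt f g1 g2 p)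
    (hf : DifferentiableAt ℝ f p) (hg1 : DifferentiableAt ℝ g1 p.1)
    (hg2 : DifferentiableAt ℝ g2 p.2) {e : R2} (hfe : fderiv ℝ f p e = 0)
    (he1 : deriv g1 p.1 * e.1 = 0) (he2 : deriv g2 p.2 * e.2 = 0) : e = 0 := by
  have hg : HasFDerivAt (fun q : R2 => (g1 q.1, g2 q.2)) _ p :=
    (hg1.hasDerivAt.comp_hasFDerivAt p (hasFDerivAt_fst (𝕜 := ℝ))).prodMk
      (hg2.hasDerivAt.comp_hasFDerivAt p (hasFDerivAt_snd (𝕜 := ℝ)))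
  have hn := (differentiable_normalOfGauss (g1 p.1, g2 p.2)).hasFDerivAt.comp p hg
  have hlift : HasFDerivAt (fun q => (f q, gtmsNormal g1 g2 q)) _ p := hf.hasFDerivAt.prodMk hn
  refine (injective_iff_map_eq_zero _).1 hfront e ?_
  rw [hlift.fderiv]
  simp [hfe, he1, he2, Prod.mk_zero_zero]

namespace IsGTMS

theorem pu_eq (hf : IsGTMS f g1 g2 w1 w2) (q : R2) : pu f q = w1 q.1 • lightlikeU (g1 q.1) := by
  rw [hf.deriv_u]
  simp only [lightlikeU, Prod.smul_mk, smul_eq_mul]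
  ext <;> ring

theorem pv_eq (hf : IsGTMS f g1 g2 w1 w2) (q : R2) : pv f q = w2 q.2 • lightlikeV (g2 q.2) := by
  rw [hf.deriv_v]
  simp only [lightlikeV, Prod.smul_mk, smul_eq_mul]
  ext <;> ring

theorem differentiable (hf : IsGTMS f g1 g2 w1 w2) : Differentiable ℝ f :=
  hf.smooth_f.differentiable (by simp)

theorem hasDerivAt_left (hf : IsGTMS f g1 g2 w1 w2) (u v : ℝ) :
    HasDerivAt (fun s => f (s, v)) (w1 u • lightlikeU (g1 u)) u :=
  hf.pu_eq (u, v) ▸ hasDerivAt_pu hf.differentiable u v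

theorem hasDerivAt_right (hf : IsGTMS f g1 g2 w1 w2) (u v : ℝ) :
    HasDerivAt (fun s => f (u, s)) (w2 v • lightlikeV (g2 v)) v :=
  hf.pv_eq (u, v) ▸ hasDerivAt_pv hf.differentiable u v

theorem eq_add_sub (hf : IsGTMS f g1 g2 w1 w2) (a b u v : ℝ) :
    f (u, v) = f (u, b) + (f (a, v) - f (a, b)) := by
  have hderiv (s : ℝ) : HasDerivAt (fun s => f (s, v) - f (s, b)) 0 s :=
    sub_self (w1 s • lightlikeU (g1 s)) ▸ (hf.hasDerivAt_left s v).sub (hf.hasDerivAt_left s b)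
  rw [← is_const_of_deriv_eq_zero (fun s => (hderiv s).differentiableAt)
    (fun s => (hderiv s).deriv) u a]
  abel

theorem areaDensity_eq (hf : IsGTMS f g1 g2 w1 w2) (q : R2) :
    areaDensity f g1 g2 q = w1 q.1 * (w2 q.2 * reducedAreaDensity (g1 q.1, g2 q.2)) := by
  rw [← det3_smul_lightlike_normalOfGauss, ← hf.pu_eq, ← hf.pv_eq]
  rfl

theorem ne_zero_of_w1_eq_zero (hf : IsGTMS f g1 g2 w1 w2) (hω : w1 p.1 = 0)
    (hnondeg : fderiv ℝ (areaDensity f g1 g2) p ≠ 0) :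
    deriv w1 p.1 ≠ 0 ∧ w2 p.2 ≠ 0 ∧ 1 - g1 p.1 * g2 p.2 ≠ 0 := by
  have hg1 := hf.smooth_g1.differentiable (by simp)
  have hg2 := hf.smooth_g2.differentiable (by simp)
  have hw1 := hf.smooth_w1.differentiable (by simp)
  have hw2 := hf.smooth_w2.differentiable (by simp)
  have hr := differentiable_reducedAreaDensity
  rw [funext hf.areaDensity_eq] at hnondeg
  obtain ⟨hw1', hne⟩ := ne_zero_of_fderiv_comp_mul_ne_zero (w := w1) (.fst ℝ ℝ ℝ)
    (hw1 _) (by fun_prop) hω hnondeg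
  exact ⟨hw1', left_ne_zero_of_mul hne,
    one_sub_mul_ne_zero_of_reducedAreaDensity_ne_zero (right_ne_zero_of_mul hne)⟩

theorem ne_zero_of_w2_eq_zero (hf : IsGTMS f g1 g2 w1 w2) (hω : w2 p.2 = 0)
    (hnondeg : fderiv ℝ (areaDensity f g1 g2) p ≠ 0) :
    deriv w2 p.2 ≠ 0 ∧ w1 p.1 ≠ 0 ∧ 1 - g1 p.1 * g2 p.2 ≠ 0 := by
  have hg1 := hf.smooth_g1.differentiable (by simp)
  have hg2 := hf.smooth_g2.differentiable (by simp)
  have hw1 := hf.smooth_w1.differentiable (by simp)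
  have hw2 := hf.smooth_w2.differentiable (by simp)
  have hr := differentiable_reducedAreaDensity
  rw [funext fun q => (hf.areaDensity_eq q).trans (mul_left_comm _ _ _)] at hnondeg
  obtain ⟨hw2', hne⟩ := ne_zero_of_fderiv_comp_mul_ne_zero (w := w2) (.snd ℝ ℝ ℝ)
    (hw2 _) (by fun_prop) hω hnondeg
  exact ⟨hw2', left_ne_zero_of_mul hne,
    one_sub_mul_ne_zero_of_reducedAreaDensity_ne_zero (right_ne_zero_of_mul hne)⟩

theorem deriv_g1_ne_zero (hf : IsGTMS f g1 g2 w1 w2) (hω : w1 p.1 = 0)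
    (hfront : IsFrontAt f g1 g2 p) : deriv g1 p.1 ≠ 0 := fun hzero => by
  have hpu : fderiv ℝ f p (1, 0) = 0 := (hf.pu_eq p).trans (by rw [hω, zero_smul])
  simpa using hfront.eq_zero_of_fderiv_eq_zero (hf.differentiable p)
    (hf.smooth_g1.differentiable (by simp) _) (hf.smooth_g2.differentiable (by simp) _)
    hpu (by simp [hzero]) (by simp)

theorem deriv_g2_ne_zero (hf : IsGTMS f g1 g2 w1 w2) (hω : w2 p.2 = 0)
    (hfront : IsFrontAt f g1 g2 p) : deriv g2 p.2 ≠ 0 := fun hzero => by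
  have hpv : fderiv ℝ f p (0, 1) = 0 := (hf.pv_eq p).trans (by rw [hω, zero_smul])
  simpa using hfront.eq_zero_of_fderiv_eq_zero (hf.differentiable p)
    (hf.smooth_g1.differentiable (by simp) _) (hf.smooth_g2.differentiable (by simp) _)
    hpv (by simp) (by simp [hzero])

theorem aEquiv_fCE_of_w1_eq_zero (hf : IsGTMS f g1 g2 w1 w2) (hω : w1 p.1 = 0)
    (hnondeg : fderiv ℝ (areaDensity f g1 g2) p ≠ 0) (hfront : IsFrontAt f g1 g2 p) :
    AEquiv f p fCE (0, 0) := by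
  obtain ⟨hw1', hw2, hgg⟩ := hf.ne_zero_of_w1_eq_zero hω hnondeg
  have hg1' := hf.deriv_g1_ne_zero hω hfront
  have hf' := hf.smooth_f
  have hadd (q : R2) : f q = (f (p.1, q.2) - f p) + f (q.1, p.2) :=
    (hf.eq_add_sub p.1 p.2 q.1 q.2).trans (add_comm _ _)
  refine aEquiv_fCE_of_deriv_eq_smul (A := fun u => f (u, p.2)) (B := fun v => f (p.1, v) - f p)
    (by fun_prop) (by fun_prop) (contDiff_lightlikeU.comp hf.smooth_g1) hf.smooth_w1
    (.prodComm ℝ ℝ ℝ) hadd (fun u => (hf.hasDerivAt_left u p.2).deriv) hω hw1' ?_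
  change det3 (deriv (fun v => f (p.1, v) - f p) p.2) (lightlikeU (g1 p.1))
    (deriv (lightlikeU ∘ g1) p.1) ≠ 0
  rw [((hf.hasDerivAt_right p.1 p.2).sub_const _).deriv,
    deriv_lightlikeU_comp (hf.smooth_g1.differentiable (by simp) _),
    det3_smul_lightlikeV_lightlikeU]
  positivity

theorem aEquiv_fCE_of_w2_eq_zero (hf : IsGTMS f g1 g2 w1 w2) (hω : w2 p.2 = 0)
    (hnondeg : fderiv ℝ (areaDensity f g1 g2) p ≠ 0) (hfront : IsFrontAt f g1 g2 p) :
    AEquiv f p fCE (0, 0) := by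
  obtain ⟨hw2', hw1, hgg⟩ := hf.ne_zero_of_w2_eq_zero hω hnondeg
  have hg2' := hf.deriv_g2_ne_zero hω hfront
  have hf' := hf.smooth_f
  have hadd (q : R2) : f q = f (q.1, p.2) + (f (p.1, q.2) - f p) :=
    hf.eq_add_sub p.1 p.2 q.1 q.2
  refine aEquiv_fCE_of_deriv_eq_smul (A := fun v => f (p.1, v) - f p) (B := fun u => f (u, p.2))
    (by fun_prop) (by fun_prop) (contDiff_lightlikeV.comp hf.smooth_g2) hf.smooth_w2
    (.refl ℝ R2) hadd (fun v => ((hf.hasDerivAt_right p.1 v).sub_const _).deriv) hω hw2' ?_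
  change det3 (deriv (fun u => f (u, p.2)) p.1) (lightlikeV (g2 p.2))
    (deriv (lightlikeV ∘ g2) p.2) ≠ 0
  rw [(hf.hasDerivAt_left p.1 p.2).deriv,
    deriv_lightlikeV_comp (hf.smooth_g2.differentiable (by simp) _),
    det3_smul_lightlikeU_lightlikeV]
  positivity

end IsGTMS

end Surface

/-- a non-degenerate rank-one ω-singular point at which the surface is a
front is a cuspidal edge. -/
theorem cuspidal_edge_at_omega_singular_front
    (f : R2 → R3) (g1 g2 w1 w2 : ℝ → ℝ) (hf : IsGTMS f g1 g2 w1 w2)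
    (p : R2) (hω : w1 p.1 * w2 p.2 = 0) (hrank : RankOne f p)
    (hnondeg : fderiv ℝ (areaDensity f g1 g2) p ≠ 0)
    (hfront : IsFrontAt f g1 g2 p) :
    AEquiv f p fCE (0, 0) := by
  rcases mul_eq_zero.1 hω with hw1 | hw2
  · exact hf.aEquiv_fCE_of_w1_eq_zero hw1 hnondeg hfront
  · exact hf.aEquiv_fCE_of_w2_eq_zero hw2 hnondeg hfront
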